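/- arXiv:1005.0448 — 4 statements merged into one kernel-verified Lean document; each statement's English description precedes it below -/
import Mathlib

section
/- Let F be an algebraically closed field, let E be an F-vector space of finite dimension r, and let B₁, B₂ be two symplectic forms on E. Let V ⊆ E be a subspace of dimension k which is totally isotropic for both B₁ and B₂. Since V is totally isotropic for each Bᵢ, the expression Bᵢ(v, e) for v ∈ V depends only on the class of e in E/V, so for φ ∈ Hom_F(V, E/V) the pairing Bᵢ(v₁, φ(v₂)) is well defined for v₁, v₂ ∈ V. Consider the subspace T = {φ ∈ Hom_F(V, E/V) : for i = 1, 2 and all v₁, v₂ ∈ V, Bᵢ(v₁, φ(v₂)) = Bᵢ(v₂, φ(v₁))}. Then dim T = k(r−k) − 2·(k(k−1)/2) if and only if there do not exist scalars λ₁, λ₂ ∈ F, not both zero, and a 2-dimensional subspace V′ ⊆ V such that λ₁·B₁(v, e) + λ₂·B₂(v, e) = 0 for all v ∈ V′ and all e ∈ E. -/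
open Module

/-!
The two symmetry conditions on `φ` are the vanishing at `φ` of all linear forms
`φ ↦ β v (φ w) - β w (φ v)`, which define a map from `⋀² V × ⋀² V` to the dual of `Hom(V, E/V)`.
Counting dimensions, `dim T` has the expected value exactly when this map is injective.

A plane spanned by `v, w` on which `λ₁ B₁ + λ₂ B₂` vanishes gives the kernel element
`(λ₁ v ∧ w, λ₂ v ∧ w)`. Conversely, view bivectors as alternating maps `V* → V`: a nonzero element
`(ω₁, ω₂)` of the kernel satisfies `β₁ ∘ ω₁ + β₂ ∘ ω₂ = 0`, so nondegeneracy of `β₁` gives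
`ker ω₂ ≤ ker ω₁`. Then `ω₁` factors through `ω₂`, and for an eigenvalue `l` of `ω₂⁻¹ ω₁` the
alternating map `ω₁ - l ω₂` has a kernel strictly larger than `ker ω₂`. Alternating maps have even
rank, so the kernel grows by at least two dimensions, and `ω₂` carries it into the kernel of
`l β₁ + β₂`.
-/

section Antisymmetrization

variable {R M N : Type*} [CommRing R] [AddCommGroup M] [Module R M] [AddCommGroup N] [Module R N]

/-- The linear map on the exterior square induced by the antisymmetrization of a bilinear map `f`:
it sends `v ∧ w` to `f v w - f w v`. -/
noncomputable def antisymmetrization (f : M →ₗ[R] M →ₗ[R] N) : ⋀[R]^2 M →ₗ[R] N :=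
  exteriorPower.alternatingMapLinearEquiv
    { toFun := fun x => f (x 0) (x 1) - f (x 1) (x 0)
      map_update_add' := fun x i a b => by
        fin_cases i <;> simp <;> abel
      map_update_smul' := fun x i c a => by
        fin_cases i <;> simp [smul_sub]
      map_eq_zero_of_eq' := fun x i j hx hij => by
        have h01 : x 0 = x 1 := by fin_cases i <;> fin_cases j <;> simp_all
        rw [h01, sub_self] }

@[simp]
lemma antisymmetrization_ιMulti (f : M →ₗ[R] M →ₗ[R] N) (x : Fin 2 → M) :
    antisymmetrization f (exteriorPower.ιMulti R 2 x) = f (x 0) (x 1) - f (x 1) (x 0) := by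
  simp only [antisymmetrization, exteriorPower.alternatingMapLinearEquiv_apply_ιMulti]
  rfl

variable (R M) in
/-- The contraction of a bivector with a linear form: `v ∧ w` sends `p` to `p w • v - p v • w`.
It identifies `⋀² M` with the alternating maps `M* → M` when `M` is a finite free module. -/
noncomputable def contraction : ⋀[R]^2 M →ₗ[R] Dual R M →ₗ[R] M :=
  antisymmetrization (LinearMap.smulRightₗ ∘ₗ Dual.eval R M).flip

lemma contraction_ιMulti (x : Fin 2 → M) (p : Dual R M) :
    contraction R M (exteriorPower.ιMulti R 2 x) p = p (x 1) • x 0 - p (x 0) • x 1 := by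
  simp [contraction]

lemma apply_contraction (ω : ⋀[R]^2 M) (p : Fin 2 → Dual R M) :
    p 0 (contraction R M ω (p 1)) =
      exteriorPower.pairingDual R M 2 (exteriorPower.ιMulti R 2 p) ω := by
  suffices h : p 0 ∘ₗ (contraction R M).flip (p 1) =
      exteriorPower.pairingDual R M 2 (exteriorPower.ιMulti R 2 p) from
    DFunLike.congr_fun h ω
  ext x
  simp [contraction_ιMulti, Matrix.det_fin_two, mul_comm]

lemma apply_contraction_self (ω : ⋀[R]^2 M) (p : Dual R M) : p (contraction R M ω p) = 0 := by
  have hp : exteriorPower.ιMulti R 2 ![p, p] = 0 :=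
    AlternatingMap.map_eq_zero_of_eq _ _ (i := 0) (j := 1) rfl zero_ne_one
  simpa [hp] using apply_contraction ω ![p, p]

lemma contraction_injective [Module.Free R M] : Function.Injective (contraction R M) := by
  classical
  obtain ⟨I, b⟩ := Module.Free.exists_basis (R := R) (M := M)
  let : LinearOrder I := linearOrderOfSTO WellOrderingRel
  rw [injective_iff_map_eq_zero]
  refine fun ω hω => (b.exteriorPower 2).ext_elem fun s => ?_
  rw [exteriorPower.basis_repr_apply, exteriorPower.ιMultiDual, exteriorPower.ιMulti_family,
    ← apply_contraction, hω]
  simp only [LinearMap.zero_apply, map_zero, Finsupp.zero_apply]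

end Antisymmetrization

section AlternatingForms

variable {K P Q : Type*} [Field K] [AddCommGroup P] [Module K P] [FiniteDimensional K P]
  [AddCommGroup Q] [Module K Q] {B B₁ B₂ : LinearMap.BilinForm K P}

lemma exists_orthogonal_eq_self (hB : B.IsAlt) : ∃ L : Submodule K P, B.orthogonal L = L := by
  obtain ⟨L, hL, hmax⟩ := exists_maximal_of_wellFoundedGT
    (fun L : Submodule K P => L ≤ B.orthogonal L) ⟨⊥, bot_le⟩
  refine ⟨L, le_antisymm (fun x hx => ?_) hL⟩
  have hsup : L ⊔ K ∙ x ≤ B.orthogonal (L ⊔ K ∙ x) := by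
    intro y hy z hz
    obtain ⟨v, hv, _, hay, rfl⟩ := Submodule.mem_sup.1 hy
    obtain ⟨a, rfl⟩ := Submodule.mem_span_singleton.1 hay
    obtain ⟨w, hw, _, hcz, rfl⟩ := Submodule.mem_sup.1 hz
    obtain ⟨c, rfl⟩ := Submodule.mem_span_singleton.1 hcz
    have hwv : B w v = 0 := hL hv w hw
    have hwx : B w x = 0 := hx w hw
    have hxv : B x v = 0 := hB.isRefl v x (hx v hv)
    simp [hwv, hwx, hxv, hB.self_eq_zero x]
  exact hmax hsup le_sup_left (le_sup_right (a := L) (Submodule.mem_span_singleton_self x))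

theorem even_finrank_range_of_isAlt (hB : B.IsAlt) : Even (finrank K (LinearMap.range B)) := by
  obtain ⟨L, hL⟩ := exists_orthogonal_eq_self hB
  have hker : LinearMap.ker B ≤ L := by
    rw [← hL, ← LinearMap.BilinForm.orthogonal_top_eq_ker hB.isRefl]
    exact LinearMap.BilinForm.orthogonal_le le_top
  have horth := LinearMap.BilinForm.finrank_add_finrank_orthogonal' (B := B) L
  rw [hL, inf_eq_right.2 hker] at horth
  have hrank := LinearMap.finrank_range_add_finrank_ker B
  rw [Nat.even_iff]
  omega

lemma range_le_range_of_isAlt (h₁ : B₁.IsAlt) (h₂ : B₂.IsAlt)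
    (hker : LinearMap.ker B₂ ≤ LinearMap.ker B₁) : LinearMap.range B₁ ≤ LinearMap.range B₂ := by
  have range_eq {B : LinearMap.BilinForm K P} (hB : B.IsAlt) :
      LinearMap.range B = (LinearMap.ker B).dualAnnihilator := by
    have hflip : LinearMap.flip B = -B := by
      ext x y
      exact (hB.neg_eq x y).symm
    rw [LinearMap.dualAnnihilator_ker_eq_range_flip, hflip, LinearMap.range_neg]
  rw [range_eq h₁, range_eq h₂]
  exact Submodule.dualAnnihilator_anti hker

lemma exists_apply_eq_smul_apply [IsAlgClosed K] {f g : P →ₗ[K] Q}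
    (hker : LinearMap.ker g ≤ LinearMap.ker f) (hrange : LinearMap.range f ≤ LinearMap.range g)
    (hg : g ≠ 0) : ∃ (l : K) (u : P), f u = l • g u ∧ g u ≠ 0 := by
  -- `l` is an eigenvalue of the endomorphism `g⁻¹ ∘ f` of `P / ker g`.
  let f' : P ⧸ LinearMap.ker g →ₗ[K] LinearMap.range g :=
    (LinearMap.ker g).liftQ (f.codRestrict _ fun u => hrange ⟨u, rfl⟩) (by simpa using hker)
  have : Nontrivial (P ⧸ LinearMap.ker g) := by
    rwa [Submodule.Quotient.nontrivial_iff, Ne, LinearMap.ker_eq_top]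
  obtain ⟨l, hl⟩ := End.exists_eigenvalue (g.quotKerEquivRange.symm.toLinearMap ∘ₗ f')
  obtain ⟨y, hy⟩ := hl.exists_hasEigenvector
  obtain ⟨u, rfl⟩ := Submodule.Quotient.mk_surjective _ y
  refine ⟨l, u, ?_, fun hu => hy.2 <| (Submodule.Quotient.mk_eq_zero _).2 hu⟩
  have := hy.apply_eq_smul
  rw [LinearMap.comp_apply, LinearEquiv.coe_coe, LinearEquiv.symm_apply_eq, map_smul] at this
  simpa [f'] using congrArg Subtype.val this

theorem exists_finrank_ker_sub_smul_ge [IsAlgClosed K] (h₁ : B₁.IsAlt) (h₂ : B₂.IsAlt)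
    (hker : LinearMap.ker B₂ ≤ LinearMap.ker B₁) (hB₂ : B₂ ≠ 0) :
    ∃ l : K, finrank K (LinearMap.ker B₂) + 2 ≤ finrank K (LinearMap.ker (B₁ - l • B₂)) := by
  obtain ⟨l, u, hu, hu₂⟩ :=
    exists_apply_eq_smul_apply hker (range_le_range_of_isAlt h₁ h₂ hker) hB₂
  have hlt : LinearMap.ker B₂ < LinearMap.ker (B₁ - l • B₂) := by
    refine SetLike.lt_iff_le_and_exists.2 ⟨fun x hx => ?_, u, ?_, hu₂⟩
    · have hx₁ : B₁ x = 0 := hker hx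
      rw [LinearMap.mem_ker] at hx ⊢
      simp [hx, hx₁]
    · simp [hu]
  -- Both ranks are even, so the strict inclusion of kernels raises the dimension by at least two.
  have hrank₂ := LinearMap.finrank_range_add_finrank_ker B₂
  have hrankl := LinearMap.finrank_range_add_finrank_ker (B₁ - l • B₂)
  have heven₂ := even_finrank_range_of_isAlt h₂
  have hevenl := even_finrank_range_of_isAlt (h₁.sub (h₂.smul l))
  have := Submodule.finrank_lt_finrank_of_lt hlt
  rw [Nat.even_iff] at heven₂ hevenl
  exact ⟨l, by omega⟩

end AlternatingForms

section SymmetricHom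

variable {R V W : Type*} [CommRing R] [AddCommGroup V] [Module R V] [AddCommGroup W] [Module R W]

/-- The linear maps `φ : V → W` that are self-adjoint for a pairing `β` of `V` with `W`:
the form `β v (φ w)` on `V` is symmetric. -/
def symmetricHom (β : V →ₗ[R] W →ₗ[R] R) : Submodule R (V →ₗ[R] W) where
  carrier := {φ | ∀ v w, β v (φ w) = β w (φ v)}
  add_mem' hφ hψ v w := by simp [hφ v w, hψ v w]
  zero_mem' v w := by simp
  smul_mem' c φ hφ v w := by simp [hφ v w]

/-- The bivector `v ∧ w` as the linear form `φ ↦ β v (φ w) - β w (φ v)` on `Hom(V, W)`, which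
measures the failure of `φ` to be self-adjoint for `β`. -/
noncomputable def asymmetry (β : V →ₗ[R] W →ₗ[R] R) : ⋀[R]^2 V →ₗ[R] Dual R (V →ₗ[R] W) :=
  antisymmetrization (LinearMap.mk₂ R (fun v w => β v ∘ₗ LinearMap.applyₗ w)
    (fun _ _ _ => by ext; simp) (fun _ _ _ => by ext; simp)
    (fun _ _ _ => by ext; simp) (fun _ _ _ => by ext; simp))

lemma asymmetry_ιMulti (β : V →ₗ[R] W →ₗ[R] R) (x : Fin 2 → V) (φ : V →ₗ[R] W) :
    asymmetry β (exteriorPower.ιMulti R 2 x) φ = β (x 0) (φ (x 1)) - β (x 1) (φ (x 0)) := by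
  simp [asymmetry]

lemma asymmetry_smulRight (β : V →ₗ[R] W →ₗ[R] R) (ω : ⋀[R]^2 V) (p : Dual R V) (e : W) :
    asymmetry β ω (p.smulRight e) = β (contraction R V ω p) e := by
  suffices h : (asymmetry β).flip (p.smulRight e) = β.flip e ∘ₗ (contraction R V).flip p from
    DFunLike.congr_fun h ω
  ext x
  simp [asymmetry_ιMulti, contraction_ιMulti]

lemma mem_symmetricHom_iff_asymmetry_eq_zero {β : V →ₗ[R] W →ₗ[R] R} {φ : V →ₗ[R] W} :
    φ ∈ symmetricHom β ↔ ∀ ω, asymmetry β ω φ = 0 := by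
  refine ⟨fun hφ => ?_, fun h v w => ?_⟩
  · suffices h : (asymmetry β).flip φ = 0 from DFunLike.congr_fun h
    ext x
    simp [asymmetry_ιMulti, hφ (x 0) (x 1)]
  · simpa [asymmetry_ιMulti, sub_eq_zero] using h (exteriorPower.ιMulti R 2 ![v, w])

lemma symmetricHom_inf_eq_dualCoannihilator (β₁ β₂ : V →ₗ[R] W →ₗ[R] R) :
    symmetricHom β₁ ⊓ symmetricHom β₂ =
      (LinearMap.range ((asymmetry β₁).coprod (asymmetry β₂))).dualCoannihilator := by
  ext φ
  simp only [Submodule.mem_inf, mem_symmetricHom_iff_asymmetry_eq_zero,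
    Submodule.mem_dualCoannihilator]
  constructor
  · rintro ⟨h₁, h₂⟩ _ ⟨⟨ω₁, ω₂⟩, rfl⟩
    simp [h₁, h₂]
  · exact fun h => ⟨fun ω => by simpa using h _ ⟨(ω, 0), rfl⟩,
      fun ω => by simpa using h _ ⟨(0, ω), rfl⟩⟩

end SymmetricHom

section Pencil

variable {F V W : Type*} [Field F] [AddCommGroup V] [Module F V] [AddCommGroup W] [Module F W]
  {β₁ β₂ : V →ₗ[F] W →ₗ[F] F}

lemma ιMulti_ne_zero_of_linearIndependent {x : Fin 2 → V} (hx : LinearIndependent F x) :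
    exteriorPower.ιMulti F 2 x ≠ 0 := by
  have := (exteriorPower.ιMulti_family_linearIndependent_field 2 hx).ne_zero
    (Set.powersetCard.ofFinEmbEquiv (RelEmbedding.refl _))
  simpa [exteriorPower.ιMulti_family] using this

lemma finrank_ker_lt_two_of_injective
    (hinj : Function.Injective ((asymmetry β₁).coprod (asymmetry β₂))) {l₁ l₂ : F}
    (hl : ¬ (l₁ = 0 ∧ l₂ = 0)) : finrank F (LinearMap.ker (l₁ • β₁ + l₂ • β₂)) < 2 := by
  by_contra! hker
  obtain ⟨x, hx⟩ := exists_linearIndependent_of_le_finrank hker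
  let ω := exteriorPower.ιMulti F 2 ((↑) ∘ x : Fin 2 → V)
  have hω : ω ≠ 0 := ιMulti_ne_zero_of_linearIndependent (hx.map' _ (Submodule.ker_subtype _))
  have hrel (i : Fin 2) (e : W) : l₁ * β₁ (x i) e + l₂ * β₂ (x i) e = 0 :=
    DFunLike.congr_fun (LinearMap.mem_ker.1 (x i).2) e
  have hzero : (asymmetry β₁).coprod (asymmetry β₂) (l₁ • ω, l₂ • ω) = 0 := by
    ext φ
    simp only [LinearMap.coprod_apply, map_smul, LinearMap.add_apply, LinearMap.smul_apply, ω,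
      asymmetry_ιMulti, Function.comp_apply, smul_eq_mul, LinearMap.zero_apply]
    linear_combination hrel 0 (φ (x 1)) - hrel 1 (φ (x 0))
  have := (map_eq_zero_iff _ hinj).1 hzero
  exact hl (by simpa [hω] using this)

variable [FiniteDimensional F V]

lemma exists_finrank_ker_contraction_sub_smul_ge [IsAlgClosed F] {ω₁ ω₂ : ⋀[F]^2 V}
    (hker : LinearMap.ker (contraction F V ω₂) ≤ LinearMap.ker (contraction F V ω₁))
    (hω₂ : ω₂ ≠ 0) :
    ∃ l : F, finrank F (LinearMap.ker (contraction F V ω₂)) + 2 ≤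
      finrank F (LinearMap.ker (contraction F V (ω₁ - l • ω₂))) := by
  have ker_eval_comp (f : Dual F V →ₗ[F] V) :
      LinearMap.ker (Dual.eval F V ∘ₗ f) = LinearMap.ker f :=
    LinearMap.ker_comp_of_ker_eq_bot f (eval_ker F V)
  have hne : Dual.eval F V ∘ₗ contraction F V ω₂ ≠ 0 := by
    rwa [Ne, ← LinearMap.ker_eq_top, ker_eval_comp, LinearMap.ker_eq_top,
      map_eq_zero_iff _ contraction_injective]
  obtain ⟨l, hl⟩ := exists_finrank_ker_sub_smul_ge
    (B₁ := Dual.eval F V ∘ₗ contraction F V ω₁) (B₂ := Dual.eval F V ∘ₗ contraction F V ω₂)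
    (apply_contraction_self ω₁) (apply_contraction_self ω₂) (by simpa only [ker_eval_comp]) hne
  rw [← LinearMap.comp_smul, ← LinearMap.comp_sub, ker_eval_comp, ker_eval_comp] at hl
  exact ⟨l, by rwa [map_sub, map_smul]⟩

lemma finrank_le_finrank_ker_add_finrank {f : V →ₗ[F] W} {p : Submodule F V} {q : Submodule F W}
    [FiniteDimensional F q] (hpq : p.map f ≤ q) :
    finrank F p ≤ finrank F (LinearMap.ker f) + finrank F q := by
  have hrank := (f.domRestrict p).finrank_range_add_finrank_ker
  have hrange : finrank F (LinearMap.range (f.domRestrict p)) ≤ finrank F q := by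
    rw [LinearMap.range_domRestrict]
    exact Submodule.finrank_mono hpq
  have hker : finrank F (LinearMap.ker (f.domRestrict p)) ≤ finrank F (LinearMap.ker f) := by
    rw [LinearMap.ker_domRestrict, ← Submodule.finrank_map_subtype_eq]
    exact Submodule.finrank_mono (by simp [Submodule.map_comap_eq])
  omega

theorem exists_two_le_finrank_ker_of_not_injective [IsAlgClosed F]
    (hβ₁ : LinearMap.ker β₁ = ⊥)
    (hinj : ¬ Function.Injective ((asymmetry β₁).coprod (asymmetry β₂))) :
    ∃ l : F, 2 ≤ finrank F (LinearMap.ker (l • β₁ + β₂)) := by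
  obtain ⟨⟨ω₁, ω₂⟩, hω, hω₀⟩ : ∃ ω, (asymmetry β₁).coprod (asymmetry β₂) ω = 0 ∧ ω ≠ 0 := by
    simpa [injective_iff_map_eq_zero] using hinj
  have hrel (p : Dual F V) : β₁ (contraction F V ω₁ p) + β₂ (contraction F V ω₂ p) = 0 := by
    ext e
    simpa [asymmetry_smulRight] using DFunLike.congr_fun hω (p.smulRight e)
  have hker : LinearMap.ker (contraction F V ω₂) ≤ LinearMap.ker (contraction F V ω₁) := by
    intro p hp
    rw [LinearMap.mem_ker] at hp ⊢
    refine (map_eq_zero_iff β₁ (LinearMap.ker_eq_bot.1 hβ₁)).1 ?_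
    simpa [hp] using hrel p
  have hω₂ : ω₂ ≠ 0 := by
    rintro rfl
    have hω₁ : contraction F V ω₁ = 0 := by
      rwa [map_zero, LinearMap.ker_zero, top_le_iff, LinearMap.ker_eq_top] at hker
    exact hω₀ (Prod.ext ((map_eq_zero_iff _ contraction_injective).1 hω₁) rfl)
  obtain ⟨l, hl⟩ := exists_finrank_ker_contraction_sub_smul_ge hker hω₂
  have hmap : (LinearMap.ker (contraction F V (ω₁ - l • ω₂))).map (contraction F V ω₂) ≤
      LinearMap.ker (l • β₁ + β₂) := by
    rintro _ ⟨p, hp, rfl⟩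
    have hp' : contraction F V ω₁ p = l • contraction F V ω₂ p := by
      simpa [sub_eq_zero] using hp
    simpa [hp'] using hrel p
  have := finrank_le_finrank_ker_add_finrank hmap
  exact ⟨l, by omega⟩

theorem asymmetry_coprod_injective_iff [IsAlgClosed F] (hβ₁ : LinearMap.ker β₁ = ⊥) :
    Function.Injective ((asymmetry β₁).coprod (asymmetry β₂)) ↔
      ∀ l₁ l₂ : F, ¬ (l₁ = 0 ∧ l₂ = 0) →
        finrank F (LinearMap.ker (l₁ • β₁ + l₂ • β₂)) < 2 := by
  refine ⟨fun hinj l₁ l₂ hl => finrank_ker_lt_two_of_injective hinj hl, fun h => ?_⟩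
  by_contra hinj
  obtain ⟨l, hl⟩ := exists_two_le_finrank_ker_of_not_injective hβ₁ hinj
  exact (h l 1 (by simp)).not_ge (by rwa [one_smul])

variable [FiniteDimensional F W]

lemma finrank_symmetricHom_inf_eq_iff_injective (hVW : finrank F V ≤ finrank F W) :
    finrank F ↥(symmetricHom β₁ ⊓ symmetricHom β₂) =
        finrank F V * finrank F W - 2 * (finrank F V).choose 2 ↔
      Function.Injective ((asymmetry β₁).coprod (asymmetry β₂)) := by
  have hrange := Subspace.finrank_add_finrank_dualCoannihilator_eq
    (LinearMap.range ((asymmetry β₁).coprod (asymmetry β₂)))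
  rw [← symmetricHom_inf_eq_dualCoannihilator, finrank_linearMap] at hrange
  have hrank := LinearMap.finrank_range_add_finrank_ker ((asymmetry β₁).coprod (asymmetry β₂))
  rw [finrank_prod, exteriorPower.finrank_eq, ← two_mul] at hrank
  have hchoose : 2 * (finrank F V).choose 2 ≤ finrank F V * finrank F W := by
    rw [Nat.choose_two_right]
    exact (Nat.mul_div_le _ _).trans (Nat.mul_le_mul_left _ (by omega))
  rw [← LinearMap.ker_eq_bot, ← Submodule.finrank_eq_zero (R := F)]
  omega

theorem finrank_symmetricHom_inf_eq_iff [IsAlgClosed F] (hβ₁ : LinearMap.ker β₁ = ⊥) :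
    finrank F ↥(symmetricHom β₁ ⊓ symmetricHom β₂) =
        finrank F V * finrank F W - 2 * (finrank F V).choose 2 ↔
      ∀ l₁ l₂ : F, ¬ (l₁ = 0 ∧ l₂ = 0) →
        finrank F (LinearMap.ker (l₁ • β₁ + l₂ • β₂)) < 2 := by
  have hVW : finrank F V ≤ finrank F W := by
    rw [← Subspace.dual_finrank_eq (V := W)]
    exact LinearMap.finrank_le_finrank_of_injective (LinearMap.ker_eq_bot.1 hβ₁)
  rw [finrank_symmetricHom_inf_eq_iff_injective hVW, asymmetry_coprod_injective_iff hβ₁]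

end Pencil

section Quotient

variable {F E : Type*} [Field F] [AddCommGroup E] [Module F E]

lemma le_finrank_iff_exists_submodule_le {K : Submodule F E} [FiniteDimensional F K] {n : ℕ} :
    n ≤ finrank F K ↔ ∃ L ≤ K, finrank F L = n := by
  refine ⟨fun hn => ?_, fun ⟨L, hLK, hL⟩ => hL ▸ Submodule.finrank_mono hLK⟩
  obtain ⟨x, hx⟩ := exists_linearIndependent_of_le_finrank hn
  refine ⟨(Submodule.span F (Set.range x)).map K.subtype, Submodule.map_subtype_le _ _, ?_⟩
  rw [Submodule.finrank_map_subtype_eq, finrank_span_eq_card hx, Fintype.card_fin]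

variable {V : Submodule F E} {B B₁ B₂ : E →ₗ[F] E →ₗ[F] F}
  {Bq Bq₁ Bq₂ : V →ₗ[F] (E ⧸ V) →ₗ[F] F}

lemma ker_quotientPairing_eq_comap
    (hBq : ∀ (v : V) (e : E), Bq v (Submodule.Quotient.mk e) = B v e) :
    LinearMap.ker Bq = (LinearMap.ker B).comap V.subtype := by
  have hcomp : (V.mkQ.dualMap ∘ₗ Bq) = B ∘ₗ V.subtype := by
    ext v e
    exact hBq v e
  rw [← LinearMap.ker_comp, ← hcomp, LinearMap.ker_comp_of_ker_eq_bot]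
  exact LinearMap.ker_eq_bot.2 (LinearMap.dualMap_injective_of_surjective V.mkQ_surjective)

lemma le_finrank_ker_quotientPairing_iff [FiniteDimensional F V]
    (hBq : ∀ (v : V) (e : E), Bq v (Submodule.Quotient.mk e) = B v e) {n : ℕ} :
    n ≤ finrank F (LinearMap.ker Bq) ↔
      ∃ V' ≤ V, finrank F V' = n ∧ ∀ v ∈ V', ∀ e, B v e = 0 := by
  have hle (V' : Submodule F E) :
      V' ≤ V ⊓ LinearMap.ker B ↔ V' ≤ V ∧ ∀ v ∈ V', ∀ e, B v e = 0 := by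
    simp only [le_inf_iff, SetLike.le_def (T := LinearMap.ker B), LinearMap.mem_ker,
      LinearMap.ext_iff, LinearMap.zero_apply]
  rw [ker_quotientPairing_eq_comap hBq, ← Submodule.finrank_map_subtype_eq, Submodule.map_comap_eq,
    Submodule.range_subtype, le_finrank_iff_exists_submodule_le]
  simp only [hle, and_comm, and_left_comm]

theorem statement1_general [IsAlgClosed F] [FiniteDimensional F E]
    (hB₁ : Disjoint V (LinearMap.ker B₁))
    (hBq₁ : ∀ (v : V) (e : E), Bq₁ v (Submodule.Quotient.mk e) = B₁ v e)
    (hBq₂ : ∀ (v : V) (e : E), Bq₂ v (Submodule.Quotient.mk e) = B₂ v e) :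
    finrank F ↥(symmetricHom Bq₁ ⊓ symmetricHom Bq₂) =
        finrank F V * (finrank F E - finrank F V) - 2 * (finrank F V * (finrank F V - 1) / 2) ↔
      ¬ ∃ (l₁ l₂ : F) (V' : Submodule F E),
        ¬ (l₁ = 0 ∧ l₂ = 0) ∧ V' ≤ V ∧ finrank F V' = 2 ∧
        ∀ v ∈ V', ∀ e : E, l₁ * B₁ v e + l₂ * B₂ v e = 0 := by
  have hker : LinearMap.ker Bq₁ = ⊥ := by
    rwa [ker_quotientPairing_eq_comap hBq₁, ← Submodule.disjoint_iff_comap_eq_bot]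
  have hpencil (l₁ l₂ : F) (v : V) (e : E) :
      (l₁ • Bq₁ + l₂ • Bq₂) v (Submodule.Quotient.mk e) = (l₁ • B₁ + l₂ • B₂) v e := by
    simp [hBq₁, hBq₂]
  rw [← Submodule.finrank_quotient, ← Nat.choose_two_right, finrank_symmetricHom_inf_eq_iff hker]
  simp only [← not_le, le_finrank_ker_quotientPairing_iff (hpencil _ _)]
  simp

end Quotient

/-- (Theorem `dsg-crit` of Osserman, fiberwise form.)
Over an algebraically closed field `F`, let `B₁, B₂` be symplectic forms on an
`r`-dimensional space `E`, and let `V ⊆ E` be a `k`-dimensional subspace which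
is totally isotropic for both forms.  Let `Bq₁, Bq₂` be the induced pairings
`V × (E/V) → F` (well defined since `V` is isotropic), and let
`T = {φ : V →ₗ E/V | Bᵢ(v₁, φ(v₂)) = Bᵢ(v₂, φ(v₁)) for i = 1,2}`.  Then
`dim T = k(r-k) - 2·(k(k-1)/2)` iff there exist no scalars `λ₁, λ₂`, not both
zero, and no `2`-dimensional subspace `V' ⊆ V` with
`λ₁·B₁(v,e) + λ₂·B₂(v,e) = 0` for all `v ∈ V'`, `e ∈ E`. -/
theorem statement1 (F : Type*) [Field F] [IsAlgClosed F]
    (E : Type*) [AddCommGroup E] [Module F E] [FiniteDimensional F E]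
    (r k : ℕ) (hr : finrank F E = r)
    (B₁ B₂ : E →ₗ[F] E →ₗ[F] F)
    (hB₁alt : ∀ v : E, B₁ v v = 0) (hB₂alt : ∀ v : E, B₂ v v = 0)
    (hB₁nd : LinearMap.ker B₁ = ⊥) (hB₂nd : LinearMap.ker B₂ = ⊥)
    (V : Submodule F E) (hk : finrank F V = k)
    (hV₁ : ∀ v ∈ V, ∀ w ∈ V, B₁ v w = 0)
    (hV₂ : ∀ v ∈ V, ∀ w ∈ V, B₂ v w = 0)
    (Bq₁ Bq₂ : V →ₗ[F] (E ⧸ V) →ₗ[F] F)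
    (hBq₁ : ∀ (v : V) (e : E), Bq₁ v (Submodule.Quotient.mk e) = B₁ v e)
    (hBq₂ : ∀ (v : V) (e : E), Bq₂ v (Submodule.Quotient.mk e) = B₂ v e)
    (T : Submodule F (V →ₗ[F] E ⧸ V))
    (hT : ∀ φ : V →ₗ[F] E ⧸ V, φ ∈ T ↔
      ((∀ v₁ v₂ : V, Bq₁ v₁ (φ v₂) = Bq₁ v₂ (φ v₁)) ∧
       (∀ v₁ v₂ : V, Bq₂ v₁ (φ v₂) = Bq₂ v₂ (φ v₁)))) :
    finrank F T = k * (r - k) - 2 * (k * (k - 1) / 2) ↔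
      ¬ ∃ (l₁ l₂ : F) (V' : Submodule F E),
        ¬ (l₁ = 0 ∧ l₂ = 0) ∧ V' ≤ V ∧ finrank F V' = 2 ∧
        ∀ v ∈ V', ∀ e : E, l₁ * B₁ v e + l₂ * B₂ v e = 0 := by
  obtain rfl : T = symmetricHom Bq₁ ⊓ symmetricHom Bq₂ := Submodule.ext hT
  exact hr ▸ hk ▸ statement1_general (hB₁nd ▸ disjoint_bot_right) hBq₁ hBq₂
end

section
/- Let F be a field, E an F-vector space of finite dimension r, and B an alternating bilinear form on E with radical K of dimension p; write r − p = 2δ. Let V ⊆ E be a subspace of dimension k which is totally isotropic for B, and set i = dim(V ∩ K). If i ≥ 1 and i > k − δ, then the orthogonal complement V^⊥ = {e ∈ E : B(v, e) = 0 for all v ∈ V} is not contained in V + K; moreover there exists a subspace V′ ⊆ E of dimension k which is totally isotropic for B and satisfies dim(V′ ∩ K) = i − 1 and dim(V ∩ V′) = k − 1. -/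
open Module

/-!
Counting dimensions, `dim V^⊥ = r - k + i` and `dim (V + K) = k + p - i`, so `V^⊥ ≤ V + K` would
force `δ ≤ k - i`. Hence there is a vector `e` of `V^⊥` outside `V + K`. Pick `u ≠ 0` in `V ∩ K`
and a complement `W` of the line `⟨u⟩` in `V`; then `V' = W + ⟨e⟩` is totally isotropic, and since
`e` avoids `V + K`, the modular law gives `V' ∩ K = W ∩ K` and `V ∩ V' = W`.
-/

theorem sup_inf_eq_inf_of_disjoint_sup {α : Type*} [Lattice α] [OrderBot α] [IsModularLattice α]
    {a b c : α} (h : Disjoint (a ⊔ c) b) : (a ⊔ b) ⊓ c = a ⊓ c := by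
  refine le_antisymm (le_inf ?_ inf_le_right) (inf_le_inf_right c le_sup_left)
  calc
    (a ⊔ b) ⊓ c ≤ (a ⊔ b) ⊓ (a ⊔ c) := inf_le_inf_left _ le_sup_right
    _ = a ⊔ b ⊓ (a ⊔ c) := sup_inf_assoc_of_le b le_sup_left
    _ = a := by rw [h.symm.eq_bot, sup_bot_eq]

section Exchange

variable {F E : Type*} [DivisionRing F] [AddCommGroup E] [Module F E] [FiniteDimensional F E]

theorem exists_le_finrank_sup_span_singleton_inf {V K : Submodule F E} {e : E} (hVK : V ⊓ K ≠ ⊥)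
    (he : e ∉ V ⊔ K) :
    ∃ W ≤ V, finrank F ↥(W ⊔ F ∙ e) = finrank F V ∧
      finrank F ↥((W ⊔ F ∙ e) ⊓ K) + 1 = finrank F ↥(V ⊓ K) ∧
      finrank F ↥(V ⊓ (W ⊔ F ∙ e)) + 1 = finrank F V := by
  obtain ⟨u, ⟨huV, huK⟩, hu⟩ := Submodule.exists_mem_ne_zero_of_ne_bot hVK
  obtain ⟨W, hdisj, hsup⟩ := IsModularLattice.exists_disjoint_and_sup_eq
    ((Submodule.span_singleton_le_iff_mem u V).2 huV)
  have hWV : W ≤ V := hsup ▸ le_sup_right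
  have huW : u ∉ W := (Submodule.disjoint_span_singleton' hu).1 hdisj.symm
  have heV : e ∉ V := fun h ↦ he (Submodule.mem_sup_left h)
  have hdimV : finrank F V = finrank F W + 1 := by
    rw [← hsup, sup_comm, Submodule.finrank_sup_span_singleton huW]
  have hdimVK : finrank F ↥(V ⊓ K) = finrank F ↥(W ⊓ K) + 1 := by
    rw [← hsup, sup_inf_assoc_of_le W ((Submodule.span_singleton_le_iff_mem u K).2 huK), sup_comm,
      Submodule.finrank_sup_span_singleton fun h ↦ huW (Submodule.mem_inf.1 h).1]
  have hinfK : (W ⊔ F ∙ e) ⊓ K = W ⊓ K := sup_inf_eq_inf_of_disjoint_sup <|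
    Submodule.disjoint_span_singleton_of_notMem fun h ↦ he (sup_le_sup_right hWV K h)
  have hinfV : V ⊓ (W ⊔ F ∙ e) = W := by
    rw [inf_comm, sup_inf_eq_inf_of_disjoint_sup, inf_eq_left.2 hWV]
    rw [sup_eq_right.2 hWV]
    exact Submodule.disjoint_span_singleton_of_notMem heV
  refine ⟨W, hWV, ?_, by rw [hinfK, hdimVK], by rw [hinfV, hdimV]⟩
  rw [Submodule.finrank_sup_span_singleton fun h ↦ heV (hWV h), hdimV]

end Exchange

section TotallyIsotropic

variable {R M : Type*} [CommSemiring R] [AddCommMonoid M] [Module R M]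

/-- A submodule is totally isotropic for a bilinear form if the form vanishes identically on it.
This is the property preserved when one line of `V` is exchanged for another; it is stated pointwise
rather than as the equivalent `V ≤ B.orthogonal V`. -/
def IsTotallyIsotropic (B : LinearMap.BilinForm R M) (V : Submodule R M) : Prop :=
  ∀ v ∈ V, ∀ w ∈ V, B v w = 0

namespace IsTotallyIsotropic

variable {B : LinearMap.BilinForm R M} {U V : Submodule R M}

theorem mono (hV : IsTotallyIsotropic B V) (hUV : U ≤ V) : IsTotallyIsotropic B U :=
  fun v hv w hw ↦ hV v (hUV hv) w (hUV hw)

theorem span_singleton {e : M} (he : B e e = 0) : IsTotallyIsotropic B (R ∙ e) := by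
  intro v hv w hw
  obtain ⟨a, rfl⟩ := Submodule.mem_span_singleton.1 hv
  obtain ⟨b, rfl⟩ := Submodule.mem_span_singleton.1 hw
  simp [he]

theorem sup (hB : B.IsRefl) (hU : IsTotallyIsotropic B U) (hV : IsTotallyIsotropic B V)
    (hUV : V ≤ B.orthogonal U) : IsTotallyIsotropic B (U ⊔ V) := by
  intro x hx y hy
  obtain ⟨u, hu, v, hv, rfl⟩ := Submodule.mem_sup.1 hx
  obtain ⟨u', hu', v', hv', rfl⟩ := Submodule.mem_sup.1 hy
  have huv' : B u v' = 0 := hUV hv' u hu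
  have hvu' : B v u' = 0 := hB u' v (hUV hv u' hu')
  simp [hU u hu u' hu', hV v hv v' hv', huv', hvu']

end IsTotallyIsotropic

end TotallyIsotropic

section Field

variable {F E : Type*} [Field F] [AddCommGroup E] [Module F E] [FiniteDimensional F E]
  {B : LinearMap.BilinForm F E} {V : Submodule F E}

theorem not_orthogonal_le_sup_ker
    (h : 2 * finrank F V + finrank F (LinearMap.ker B) <
      finrank F E + 2 * finrank F ↥(V ⊓ LinearMap.ker B)) :
    ¬ B.orthogonal V ≤ V ⊔ LinearMap.ker B := by
  intro hle
  have horth := LinearMap.BilinForm.finrank_add_finrank_orthogonal' (B := B) V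
  have hsup := Submodule.finrank_sup_add_finrank_inf_eq V (LinearMap.ker B)
  have hmono := Submodule.finrank_mono hle
  omega

theorem IsTotallyIsotropic.exists_exchange (hB : B.IsRefl) (hV : IsTotallyIsotropic B V)
    {K : Submodule F E} (hVK : V ⊓ K ≠ ⊥) {e : E} (hee : B e e = 0) (heV : e ∈ B.orthogonal V)
    (he : e ∉ V ⊔ K) :
    ∃ V' : Submodule F E, finrank F V' = finrank F V ∧ IsTotallyIsotropic B V' ∧
      finrank F ↥(V' ⊓ K) + 1 = finrank F ↥(V ⊓ K) ∧
      finrank F ↥(V ⊓ V') + 1 = finrank F V := by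
  obtain ⟨W, hWV, hdim, hdimK, hdimV⟩ := exists_le_finrank_sup_span_singleton_inf hVK he
  have heW : F ∙ e ≤ B.orthogonal W :=
    (Submodule.span_singleton_le_iff_mem e _).2 (LinearMap.BilinForm.orthogonal_le hWV heV)
  exact ⟨W ⊔ F ∙ e, hdim, (hV.mono hWV).sup hB (.span_singleton hee) heW, hdimK, hdimV⟩

end Field

/-- Let `B` be an alternating bilinear form on an
`r`-dimensional space `E` over a field `F`, with radical `K` of dimension `p`,
where `r - p = 2δ`.  Let `V` be a totally isotropic subspace of dimension `k`
and set `i = dim (V ∩ K)`.  If `i ≥ 1` and `i > k - δ`, then the orthogonal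
complement `V^⊥` is not contained in `V + K`, and there exists a totally
isotropic subspace `V'` of dimension `k` with `dim (V' ∩ K) = i - 1` and
`dim (V ∩ V') = k - 1`. -/
theorem statement6 (F : Type*) [Field F]
    (E : Type*) [AddCommGroup E] [Module F E] [FiniteDimensional F E]
    (r p δ k i : ℕ) (hr : finrank F E = r)
    (B : E →ₗ[F] E →ₗ[F] F) (halt : ∀ v : E, B v v = 0)
    (K : Submodule F E) (hK : ∀ e : E, e ∈ K ↔ ∀ v : E, B e v = 0)
    (hp : finrank F K = p) (hδ : r - p = 2 * δ)
    (V : Submodule F E) (hk : finrank F V = k)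
    (hV : ∀ v ∈ V, ∀ w ∈ V, B v w = 0)
    (hi : finrank F ↥(V ⊓ K) = i) (hi1 : 1 ≤ i) (hi2 : k - δ < i)
    (Vperp : Submodule F E)
    (hVperp : ∀ e : E, e ∈ Vperp ↔ ∀ v ∈ V, B v e = 0) :
    ¬ Vperp ≤ V ⊔ K ∧
      ∃ V' : Submodule F E, finrank F V' = k ∧
        (∀ v ∈ V', ∀ w ∈ V', B v w = 0) ∧
        finrank F ↥(V' ⊓ K) = i - 1 ∧ finrank F ↥(V ⊓ V') = k - 1 := by
  have hB : B.IsAlt := halt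
  obtain rfl : K = LinearMap.ker B := by
    ext e
    simp [hK, LinearMap.ext_iff]
  obtain rfl : Vperp = LinearMap.BilinForm.orthogonal B V := by
    ext e
    exact hVperp e
  have hnot : ¬ LinearMap.BilinForm.orthogonal B V ≤ V ⊔ LinearMap.ker B := by
    apply not_orthogonal_le_sup_ker
    have hpr := Submodule.finrank_le (LinearMap.ker B)
    omega
  have hVK : V ⊓ LinearMap.ker B ≠ ⊥ := by
    rw [← Submodule.one_le_finrank_iff, hi]
    exact hi1
  obtain ⟨e, heV, he⟩ := SetLike.not_le_iff_exists.1 hnot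
  obtain ⟨V', hdim, hV', hdimK, hdimV⟩ :=
    IsTotallyIsotropic.exists_exchange hB.isRefl hV hVK (halt e) heV he
  exact ⟨hnot, V', hdim.trans hk, hV', by omega, by omega⟩
end

section
/- Let F be a field, let V and W be finite-dimensional F-vector spaces with dim V = k and dim W = n, and let ψ₁, …, ψ_m : W → V* be surjective linear maps to the dual space of V. Suppose there exist a 2-dimensional subspace V′ ⊆ V and scalars λ₁, …, λ_m ∈ F, not all zero, such that Σᵢ λᵢ·(ψᵢ(w))(v) = 0 for all v ∈ V′ and all w ∈ W. Then the subspace {φ ∈ Hom_F(V, W) : ψᵢ∘φ is symmetric for all i = 1, …, m} of Hom_F(V, W) has dimension strictly greater than kn − m·(k(k−1)/2). -/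
open Module

/-!
Sending `φ` to the antisymmetrizations of the bilinear forms `ψ i ∘ φ` is a linear map from
`Hom(V, W)` to `ι → (⋀² V)*` whose kernel consists of the `φ` with all `ψ i ∘ φ` symmetric. When
`∑ i, l i • ψ i` vanishes on `V'`, so does the restriction to `⋀² V'` of the combination of these
antisymmetrizations with coefficients `l`. As `l ≠ 0`, combining and restricting is a surjection
onto `(⋀² V')*`, so the rank is at most `card ι * choose (dim V) 2 - choose (dim V') 2`; for
`dim V' = 2` the gain is `1`.
-/

theorem finrank_add_finrank_le_of_comp_eq_zero {K E G H : Type*} [DivisionRing K]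
    [AddCommGroup E] [Module K E] [AddCommGroup G] [Module K G] [AddCommGroup H] [Module K H]
    [FiniteDimensional K E] [FiniteDimensional K G] {f : E →ₗ[K] G} {g : G →ₗ[K] H}
    (hg : Function.Surjective g) (hgf : g ∘ₗ f = 0) :
    finrank K E + finrank K H ≤ finrank K (LinearMap.ker f) + finrank K G := by
  have hle : finrank K (LinearMap.range f) ≤ finrank K (LinearMap.ker g) :=
    Submodule.finrank_mono (LinearMap.range_le_ker_iff.mpr hgf)
  have hE := f.finrank_range_add_finrank_ker
  have hG := g.finrank_range_add_finrank_ker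
  rw [LinearMap.range_eq_top.mpr hg, finrank_top] at hG
  omega

section CommRing

variable {R V W ι : Type*} [CommRing R] [AddCommGroup V] [Module R V] [AddCommGroup W] [Module R W]

theorem finrank_dual_exteriorPower [Nontrivial R] [Module.Free R V] [Module.Finite R V] (n : ℕ) :
    finrank R (Dual R (⋀[R]^n V)) = (finrank R V).choose n :=
  (finrank_linearMap_self R R _).trans (exteriorPower.finrank_eq R n)

/-- The antisymmetrization `u ∧ v ↦ B u v - B v u` of a bilinear form `B`, as a functional on the
exterior square; it measures the failure of `B` to be symmetric. The form is passed to Mathlib's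
alternatization as a linear map into the alternating `1`-forms. -/
noncomputable def symmetryDefect : (V →ₗ[R] Dual R V) →ₗ[R] Dual R (⋀[R]^2 V) :=
  exteriorPower.alternatingMapLinearEquiv.toLinearMap ∘ₗ
    AlternatingMap.alternatizeUncurryFinLM ∘ₗ
      LinearMap.compRight R (exteriorPower.alternatingMapLinearEquiv.symm.toLinearMap ∘ₗ
        (exteriorPower.oneEquiv R V).toLinearMap.dualMap)

theorem symmetryDefect_ιMulti (B : V →ₗ[R] Dual R V) (v : Fin 2 → V) :
    symmetryDefect B (exteriorPower.ιMulti R 2 v) = B (v 0) (v 1) - B (v 1) (v 0) := by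
  simp [symmetryDefect, AlternatingMap.alternatizeUncurryFin_apply, Fin.removeNth, sub_eq_add_neg]

theorem symmetryDefect_eq_zero_iff {B : V →ₗ[R] Dual R V} :
    symmetryDefect B = 0 ↔ ∀ u v, B u v = B v u := by
  constructor
  · intro h u v
    have huv := symmetryDefect_ιMulti B ![u, v]
    rw [h] at huv
    exact sub_eq_zero.mp huv.symm
  · intro h
    ext v
    simp [symmetryDefect_ιMulti, h (v 0) (v 1)]

/-- The linear map whose `i`-th component sends `φ` to the symmetry defect of `ψ i ∘ φ`. -/
noncomputable def compSymmetryDefects (ψ : ι → W →ₗ[R] Dual R V) :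
    (V →ₗ[R] W) →ₗ[R] ι → Dual R (⋀[R]^2 V) :=
  LinearMap.pi fun i ↦ symmetryDefect ∘ₗ LinearMap.compRight R (ψ i)

/-- The submodule of the `φ : V →ₗ[R] W` such that every `ψ i ∘ φ` is symmetric. -/
noncomputable def symmetricHoms (ψ : ι → W →ₗ[R] Dual R V) : Submodule R (V →ₗ[R] W) :=
  LinearMap.ker (compSymmetryDefects ψ)

theorem mem_symmetricHoms {ψ : ι → W →ₗ[R] Dual R V} {φ : V →ₗ[R] W} :
    φ ∈ symmetricHoms ψ ↔ ∀ i u v, ψ i (φ u) v = ψ i (φ v) u := by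
  simp [symmetricHoms, compSymmetryDefects, funext_iff, symmetryDefect_eq_zero_iff]

/-- The linear map combining a family of functionals on the exterior square of `V` with
coefficients `l` and restricting the result to the exterior square of `V'`. -/
noncomputable def restrictCombination [Fintype ι] (l : ι → R) (V' : Submodule R V) :
    (ι → Dual R (⋀[R]^2 V)) →ₗ[R] Dual R (⋀[R]^2 V') :=
  (exteriorPower.map 2 V'.subtype).dualMap ∘ₗ ∑ i, l i • LinearMap.proj i

theorem restrictCombination_comp_compSymmetryDefects [Fintype ι] {ψ : ι → W →ₗ[R] Dual R V}
    {l : ι → R} {V' : Submodule R V} (hrel : ∀ v ∈ V', ∀ w, ∑ i, l i * ψ i w v = 0) :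
    restrictCombination l V' ∘ₗ compSymmetryDefects ψ = 0 := by
  ext φ v
  have hvanish (x y : V') : ∑ i, l i * ψ i (φ x) y = 0 := hrel y y.2 (φ x)
  simp [restrictCombination, compSymmetryDefects, symmetryDefect_ιMulti, mul_sub,
    Finset.sum_sub_distrib, hvanish]

end CommRing

section Field

variable {F V W ι : Type*} [Field F] [AddCommGroup V] [Module F V] [AddCommGroup W] [Module F W]

theorem sum_smul_proj_surjective [Fintype ι] {l : ι → F} (hl : l ≠ 0) :
    Function.Surjective (∑ i, l i • LinearMap.proj i : (ι → V) →ₗ[F] V) := by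
  classical
  obtain ⟨i, hi⟩ := Function.ne_iff.mp hl
  intro v
  refine ⟨Pi.single i ((l i)⁻¹ • v), ?_⟩
  simp [Pi.single_apply, smul_smul, mul_inv_cancel₀ hi]

theorem restrictCombination_surjective [Fintype ι] {l : ι → F} (hl : l ≠ 0) (V' : Submodule F V) :
    Function.Surjective (restrictCombination l V') :=
  (LinearMap.dualMap_surjective_of_injective
    (exteriorPower.map_injective_field V'.injective_subtype)).comp (sum_smul_proj_surjective hl)

theorem statement9_general [Fintype ι] [FiniteDimensional F V] [FiniteDimensional F W]
    (ψ : ι → W →ₗ[F] Dual F V) (V' : Submodule F V) {l : ι → F} (hl : l ≠ 0)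
    (hrel : ∀ v ∈ V', ∀ w, ∑ i, l i * ψ i w v = 0) :
    finrank F V * finrank F W + (finrank F V').choose 2 ≤
      finrank F (symmetricHoms ψ) + Fintype.card ι * (finrank F V).choose 2 := by
  have h := finrank_add_finrank_le_of_comp_eq_zero (restrictCombination_surjective hl V')
    (restrictCombination_comp_compSymmetryDefects hrel)
  rwa [finrank_linearMap, finrank_pi_fintype, Finset.sum_const, Finset.card_univ, smul_eq_mul,
    finrank_dual_exteriorPower, finrank_dual_exteriorPower] at h

end Field

/-- (Lemma `msg-easy` of Osserman.)  Let `V, W` be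
finite-dimensional vector spaces over a field `F` with `dim V = k`,
`dim W = n`, and let `ψ₁, …, ψ_m : W → V*` be surjective linear maps.  If
there exist a `2`-dimensional subspace `V' ⊆ V` and scalars `λ₁, …, λ_m`,
not all zero, with `∑ i, λᵢ ψᵢ(w)(v) = 0` for all `v ∈ V'` and `w ∈ W`,
then the subspace `{φ | ψᵢ ∘ φ symmetric for all i}` of `Hom(V, W)` has
dimension strictly greater than `k n - m·(k(k-1)/2)`. -/
theorem statement9 (F : Type*) [Field F]
    (V W : Type*) [AddCommGroup V] [Module F V] [AddCommGroup W] [Module F W]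
    [FiniteDimensional F V] [FiniteDimensional F W]
    (k n m : ℕ) (hk : finrank F V = k) (hn : finrank F W = n)
    (ψ : Fin m → (W →ₗ[F] Module.Dual F V))
    (hψ : ∀ i : Fin m, Function.Surjective (ψ i))
    (V' : Submodule F V) (hV' : finrank F V' = 2)
    (l : Fin m → F) (hl : l ≠ 0)
    (hrel : ∀ v ∈ V', ∀ w : W, ∑ i : Fin m, l i * ψ i w v = 0)
    (S : Submodule F (V →ₗ[F] W))
    (hS : ∀ φ : V →ₗ[F] W, φ ∈ S ↔
      ∀ i : Fin m, ∀ v₁ v₂ : V, ψ i (φ v₁) v₂ = ψ i (φ v₂) v₁) :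
    ((k * n : ℕ) : ℤ) - ((m * (k * (k - 1) / 2) : ℕ) : ℤ)
      < (finrank F S : ℤ) := by
  obtain rfl : S = symmetricHoms ψ := Submodule.ext fun φ ↦ (hS φ).trans mem_symmetricHoms.symm
  have h := statement9_general ψ V' hl hrel
  rw [hV', hk, hn, Fintype.card_fin, Nat.choose_self, Nat.choose_two_right] at h
  lia
end

section
/- Let F be a field and let k ≤ n be positive integers. Let A be a k×n matrix over F in generalized Jordan normal form, with diagonal entries λ₁, …, λ_k and superdiagonal entries ε₁, …, ε_{k−1} ∈ {0,1} (convention ε₀ = 0). Suppose there exist scalars c_{i,j}, c′_{i,j} ∈ F for 1 ≤ i < j ≤ k such that for every n×k matrix B over F one has Σ_{i<j} c_{i,j}(B_{i,j} − B_{j,i}) = Σ_{i<j} c′_{i,j}((AB)_{i,j} − (AB)_{j,i}). Extend the scalars by the conventions c′_{a,a} = 0 and c′_{b,a} = −c′_{a,b} for a < b. Let i ∈ {1, …, k} be an index such that either ε_{i−1} = 0 or c′_{i−1,j} = 0 for all j ∈ {1, …, k}. Then the row vector v = (c′_{i,1}, …, c′_{i,k}) ∈ F^k satisfies v·(A − λ_i·J_{k,n})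 = 0 as a row vector in F^n. -/
/-!
Let `C` and `C'` be the skew-symmetric matrices with strictly upper entries `c` and `c'`. The
hypothesis says that `B ↦ tr (Cᵀ J B)` and `B ↦ tr (C'ᵀ A B)` are the same linear form, so testing
it on matrix units gives `C' A = C J`: the columns of `C' A` beyond the `k`-th vanish, and the first
`k` form the skew-symmetric matrix `C`. By the assumption on `i`, the `i`-th column of `C' A` is
`λ_i` times the `i`-th column of `C'`. Skew-symmetry of `C` and `C'` turns this into the same
statement about rows: the `i`-th row of `C' A` is `λ_i` times the `i`-th row of `C' J`.
-/

section SkewSymmetric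

variable {ι R : Type*} [LinearOrder ι] [NonAssocRing R]

/-- The skew-symmetric matrix with zero diagonal whose entries strictly above the diagonal are those
of `c`; the other entries of `c` are ignored. -/
def skewExtension (c : ι → ι → R) (a b : ι) : R :=
  if a < b then c a b else if b < a then -c b a else 0

theorem skewExtension_eq_self {c : ι → ι → R} (hdiag : ∀ a, c a a = 0)
    (hanti : ∀ a b, a < b → c b a = -c a b) : skewExtension c = c := by
  ext a b
  rcases lt_trichotomy a b with hab | rfl | hba
  · simp [skewExtension, hab]
  · simp [skewExtension, hdiag]
  · simp [skewExtension, hba, hba.not_gt, hanti b a hba]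

theorem skewExtension_swap (c : ι → ι → R) (a b : ι) :
    skewExtension c b a = -skewExtension c a b := by
  rcases lt_trichotomy a b with hab | rfl | hba
  · simp [skewExtension, hab, hab.not_gt]
  · simp [skewExtension]
  · simp [skewExtension, hba, hba.not_gt]

theorem sum_lt_mul_sub_eq_sum_skewExtension_mul (s : Finset ι) (c G : ι → ι → R) :
    ∑ a ∈ s, ∑ b ∈ s with a < b, c a b * (G a b - G b a)
      = ∑ a ∈ s, ∑ b ∈ s, skewExtension c a b * G a b := by
  have split_entry (a b : ι) : skewExtension c a b * G a b
      = (if a < b then c a b * G a b else 0) - if b < a then c b a * G a b else 0 := by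
    rcases lt_trichotomy a b with hab | rfl | hba
    · simp [skewExtension, hab, hab.not_gt]
    · simp [skewExtension]
    · simp [skewExtension, hba, hba.not_gt]
  simp only [split_entry, mul_sub, Finset.sum_sub_distrib, Finset.sum_filter]
  rw [Finset.sum_comm (f := fun a b => if b < a then c b a * G a b else 0)]

theorem sum_Icc_succ_mul_sub_eq_sum_skewExtension_mul (m k : ℕ) (c G : ℕ → ℕ → R) :
    ∑ a ∈ Finset.Icc m k, ∑ b ∈ Finset.Icc (a + 1) k, c a b * (G a b - G b a)
      = ∑ a ∈ Finset.Icc m k, ∑ b ∈ Finset.Icc m k, skewExtension c a b * G a b := by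
  rw [← sum_lt_mul_sub_eq_sum_skewExtension_mul]
  refine Finset.sum_congr rfl fun a ha => Finset.sum_congr ?_ fun _ _ => rfl
  grind

end SkewSymmetric

section BilinearIdentity

variable {ι R : Type*} [DecidableEq ι] [NonAssocRing R] {s t : Finset ι} {A C D : ι → ι → R}

theorem sum_mul_eq_ite_of_forall_sum_eq
    (h : ∀ B : ι → ι → R, ∑ a ∈ s, ∑ b ∈ s, C a b * B a b
      = ∑ a ∈ s, ∑ b ∈ s, D a b * ∑ l ∈ t, A a l * B l b)
    {p q : ι} (hp : p ∈ t) (hq : q ∈ s) :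
    ∑ a ∈ s, D a q * A a p = if p ∈ s then C p q else 0 := by
  have hunit := h fun a b => if a = p then if b = q then 1 else 0 else 0
  simpa [hp, hq] using hunit.symm

theorem sum_mul_sub_eq_zero_of_forall_sum_eq
    (hC : ∀ a b, C b a = -C a b) (hD : ∀ a b, D b a = -D a b)
    (h : ∀ B : ι → ι → R, ∑ a ∈ s, ∑ b ∈ s, C a b * B a b
      = ∑ a ∈ s, ∑ b ∈ s, D a b * ∑ l ∈ t, A a l * B l b)
    {i : ι} (his : i ∈ s) (hit : i ∈ t)
    (hcol : ∀ l ∈ s, l ≠ i → ∀ j ∈ s, D l j * A l i = 0) {j : ι} (hj : j ∈ t) :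
    ∑ l ∈ s, D i l * (A l j - if l = j then A i i else 0) = 0 := by
  have hrow : ∑ l ∈ s, D i l * A l j = if j ∈ s then C i j else 0 := by
    simp only [hD _ i, hC j i, neg_mul, Finset.sum_neg_distrib,
      sum_mul_eq_ite_of_forall_sum_eq h hj his]
    split_ifs <;> simp
  have hentry (hjs : j ∈ s) : C i j = D i j * A i i := by
    calc C i j = ∑ l ∈ s, D l j * A l i := by
          rw [sum_mul_eq_ite_of_forall_sum_eq h hit hjs, if_pos his]
      _ = D i j * A i i :=
          Finset.sum_eq_single_of_mem i his fun l hl hli => hcol l hl hli j hjs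
  simp only [mul_sub, Finset.sum_sub_distrib, hrow, mul_ite, mul_zero, Finset.sum_ite_eq']
  split_ifs with hjs
  · rw [hentry hjs, sub_self]
  · exact sub_self 0

end BilinearIdentity

theorem statement14_general {R : Type*} [NonAssocRing R] {k n : ℕ} (hkn : k ≤ n) {A : ℕ → ℕ → R}
    (hAzero : ∀ i j, 1 ≤ i → i ≤ k → 1 ≤ j → j ≤ k → j ≠ i → j ≠ i + 1 → A i j = 0)
    {c c' : ℕ → ℕ → R} (hc'diag : ∀ a, c' a a = 0) (hc'anti : ∀ a b, a < b → c' b a = -c' a b)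
    (hident : ∀ B : ℕ → ℕ → R,
      ∑ i ∈ Finset.Icc 1 k, ∑ j ∈ Finset.Icc (i + 1) k, c i j * (B i j - B j i)
      = ∑ i ∈ Finset.Icc 1 k, ∑ j ∈ Finset.Icc (i + 1) k,
          c' i j * ((∑ l ∈ Finset.Icc 1 n, A i l * B l j) - ∑ l ∈ Finset.Icc 1 n, A j l * B l i))
    {i : ℕ} (hi1 : 1 ≤ i) (hik : i ≤ k)
    (hmin : ∀ l, 1 ≤ l → l + 1 = i → A l i = 0 ∨ ∀ j, 1 ≤ j → j ≤ k → c' l j = 0)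
    {j : ℕ} (hj1 : 1 ≤ j) (hjn : j ≤ n) :
    ∑ l ∈ Finset.Icc 1 k, c' i l * (A l j - if l = j then A i i else 0) = 0 := by
  have hc' : skewExtension c' = c' := skewExtension_eq_self hc'diag hc'anti
  have hpair (B : ℕ → ℕ → R) :
      ∑ a ∈ Finset.Icc 1 k, ∑ b ∈ Finset.Icc 1 k, skewExtension c a b * B a b
        = ∑ a ∈ Finset.Icc 1 k, ∑ b ∈ Finset.Icc 1 k,
            c' a b * ∑ l ∈ Finset.Icc 1 n, A a l * B l b := by
    rw [← sum_Icc_succ_mul_sub_eq_sum_skewExtension_mul, hident B,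
      sum_Icc_succ_mul_sub_eq_sum_skewExtension_mul 1 k c'
        fun a b => ∑ l ∈ Finset.Icc 1 n, A a l * B l b, hc']
  have hcol : ∀ l ∈ Finset.Icc 1 k, l ≠ i → ∀ j ∈ Finset.Icc 1 k, c' l j * A l i = 0 := by
    intro l hl hli j hj
    rw [Finset.mem_Icc] at hl hj
    by_cases hsucc : l + 1 = i
    · rcases hmin l hl.1 hsucc with hA | hrow
      · rw [hA, mul_zero]
      · rw [hrow j hj.1 hj.2, zero_mul]
    · rw [hAzero l i hl.1 hl.2 hi1 hik hli.symm (Ne.symm hsucc), mul_zero]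
  exact sum_mul_sub_eq_zero_of_forall_sum_eq (skewExtension_swap c)
    (hc' ▸ skewExtension_swap c') hpair (Finset.mem_Icc.2 ⟨hi1, hik⟩)
    (Finset.mem_Icc.2 ⟨hi1, hik.trans hkn⟩) hcol (Finset.mem_Icc.2 ⟨hj1, hjn⟩)

/-- (The eigenvector construction in the proof of Lemma
`technical-second` of Osserman.)  Let `A` be a `k × n` matrix over a field
`F` (indexed by `{1, …, k} × {1, …, n}`) in generalized Jordan normal form,
with diagonal entries `λ₁, …, λ_k` and superdiagonal entries
`ε₁, …, ε_{k-1} ∈ {0, 1}` (convention `ε₀ = 0`).  Suppose scalars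
`c_{i,j}, c'_{i,j}` (`1 ≤ i < j ≤ k`, with `c'` extended by `c'_{a,a} = 0`
and `c'_{b,a} = -c'_{a,b}` for `a < b`) satisfy, for every `n × k` matrix
`B`, `∑_{i<j} c_{i,j}(B_{i,j} - B_{j,i}) = ∑_{i<j} c'_{i,j}((AB)_{i,j} - (AB)_{j,i})`.
Let `i ∈ {1, …, k}` be such that either `ε_{i-1} = 0` or `c'_{i-1,j} = 0`
for all `j ∈ {1, …, k}`.  Then the row vector `v = (c'_{i,1}, …, c'_{i,k})`
satisfies `v ⬝ (A - λ_i J_{k,n}) = 0`. -/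
theorem statement14 (F : Type*) [Field F] (k n : ℕ) (hk : 1 ≤ k) (hkn : k ≤ n)
    (A : ℕ → ℕ → F) (lam eps : ℕ → F)
    (hlam : ∀ i, 1 ≤ i → i ≤ k → lam i = A i i)
    (heps : ∀ i, 1 ≤ i → i < k → eps i = A i (i + 1))
    (heps0 : eps 0 = 0)
    (heps01 : ∀ i, 1 ≤ i → i < k → eps i = 0 ∨ eps i = 1)
    (hAzero : ∀ i j, 1 ≤ i → i ≤ k → 1 ≤ j → j ≤ k → j ≠ i → j ≠ i + 1 →
      A i j = 0)
    (hblock : ∀ i, 1 ≤ i → i < k → eps i = 1 → lam (i + 1) = lam i)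
    (c c' : ℕ → ℕ → F)
    (hc'diag : ∀ a, c' a a = 0)
    (hc'anti : ∀ a b, a < b → c' b a = -c' a b)
    (hident : ∀ B : ℕ → ℕ → F,
      ∑ i ∈ Finset.Icc 1 k, ∑ j ∈ Finset.Icc (i + 1) k,
        c i j * (B i j - B j i)
      = ∑ i ∈ Finset.Icc 1 k, ∑ j ∈ Finset.Icc (i + 1) k,
          c' i j * ((∑ l ∈ Finset.Icc 1 n, A i l * B l j)
            - (∑ l ∈ Finset.Icc 1 n, A j l * B l i)))
    (i : ℕ) (hi1 : 1 ≤ i) (hik : i ≤ k)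
    (hmin : eps (i - 1) = 0 ∨ ∀ j, 1 ≤ j → j ≤ k → c' (i - 1) j = 0) :
    ∀ j, 1 ≤ j → j ≤ n →
      ∑ l ∈ Finset.Icc 1 k,
        c' i l * (A l j - if l = j then lam i else 0) = 0 := by
  intro j hj1 hjn
  rw [hlam i hi1 hik]
  refine statement14_general hkn hAzero hc'diag hc'anti hident hi1 hik ?_ hj1 hjn
  rintro l hl rfl
  simpa only [Nat.add_sub_cancel, heps l hl hik] using hmin
end
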